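/- Perimeter deficit lower bound for graph perturbations of the lens (Step 2 of the proof of Theorem 4.2). Let σ ∈ [−1/2, 1/2] and let g₁, g₂ : ℝ → ℝ be Lipschitz functions such that: g₁ = g₂ on ℝ ∖ I_σ; g₁ and g₂ vanish outside some compact set; |g₁'(x)| ≤ 1 for a.e. x ∉ I_σ; |gᵢ'(x)| ≤ 2 for a.e. x ∈ I_σ (i = 1,2); and ∫_{I_σ} (g₁ − g₂) dx = m. Then ∫_{ℝ∖I_σ} (√(1 + g₁'²) − 1) dx + ∫_{I_σ} √(1 + g₁'²) dx + ∫_{I_σ} √(1 + g₂'²) dx − 4π/3 − √3·σ ≥ 2^{−5/2}·∫_{ℝ∖I_σ} g₁'² dx + (2·5^{3/2})^{−1}·Σ_{i=1,2} ∫_{I_σ} (gᵢ' − ũᵢ')² dx + m·σ²/(1+σ). -/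

import Mathlib

/-!
The function `f(q) = √(1+q²)` is uniformly convex on bounded sets, so it lies above its tangent
lines by a quadratic amount (`tangent_bound`, `flat_bound`). Off `I_σ` the tangent at slope `0`
gives the claim directly. On `I_σ` the tangent is taken at the slope `∓y/√(1-y²)`, `y = x/(1+σ)`,
of the rescaled arc: there `f'(p) = ∓y` and `f(p) - p f'(p) = √(1-y²)`, so
`f(g₁') + f(g₂') ≥ 2√(1-y²) - y (g₁' - g₂') + (quadratic remainder)`.
The term linear in `g₁' - g₂'` is integrated by parts (`integral_mul_deriv_sub`): since `g₁ = g₂` at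
the endpoints of `I_σ`, it contributes `m/(1+σ)` by the volume constraint. The first term is the
explicit integral `(1+σ)(m + √3)` (`integral_arc_scaled`). Subtracting `4π/3 + √3σ` leaves exactly
`m((1+σ) + 1/(1+σ) - 2) = mσ²/(1+σ)`.
-/

open MeasureTheory

/-- `ℓ = √3/2`, the half-width of the unit-radius standard lens. -/
noncomputable def ell : ℝ := Real.sqrt 3 / 2

/-- `m = 2π/3 − √3/2`, the area of the unit-radius standard lens. -/
noncomputable def mlens : ℝ := 2 * Real.pi / 3 - Real.sqrt 3 / 2

/-- The profile `u(x) = √(1−x²) − 1/2` for `|x| ≤ ℓ`, extended by `0`. -/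
noncomputable def ulens (x : ℝ) : ℝ :=
  if |x| ≤ ell then Real.sqrt (1 - x ^ 2) - 1 / 2 else 0

/-- The rescaled profile `ũ(x) = (1+σ)·u(x/(1+σ))`. -/
noncomputable def utilde (σ x : ℝ) : ℝ := (1 + σ) * ulens (x / (1 + σ))

/-- The interval `I_σ = [−(1+σ)ℓ, (1+σ)ℓ]`. -/
noncomputable def Isig (σ : ℝ) : Set ℝ := Set.Icc (-((1 + σ) * ell)) ((1 + σ) * ell)

/-- Quadratic lower bound for `√(1+q²)` around its tangent line at slope `p`. It follows from the
identity `(1+q²)(1+p²) = (1+pq)² + (q-p)²`. -/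
lemma tangent_bound {p q : ℝ} (hp : |p| ≤ 2) (hq : |q| ≤ 2) :
    (1 + p * q) / Real.sqrt (1 + p ^ 2) + 1 / (10 * Real.sqrt 5) * (q - p) ^ 2
      ≤ Real.sqrt (1 + q ^ 2) := by
  have hp2 : p ^ 2 ≤ 4 := by nlinarith [abs_le.mp hp]
  have hq2 : q ^ 2 ≤ 4 := by nlinarith [abs_le.mp hq]
  have hA2 := Real.sq_sqrt (show (0 : ℝ) ≤ 1 + q ^ 2 by positivity)
  have hB2 := Real.sq_sqrt (show (0 : ℝ) ≤ 1 + p ^ 2 by positivity)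
  have hA5 : Real.sqrt (1 + q ^ 2) ≤ Real.sqrt 5 := Real.sqrt_le_sqrt (by linarith)
  have hB5 : Real.sqrt (1 + p ^ 2) ≤ Real.sqrt 5 := Real.sqrt_le_sqrt (by linarith)
  have hA0 : 0 < Real.sqrt (1 + q ^ 2) := Real.sqrt_pos.mpr (by positivity)
  have hB0 : 0 < Real.sqrt (1 + p ^ 2) := Real.sqrt_pos.mpr (by positivity)
  have h5 := Real.sq_sqrt (show (0 : ℝ) ≤ 5 by norm_num)
  have h50 : 0 < Real.sqrt 5 := Real.sqrt_pos.mpr (by norm_num)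
  set A := Real.sqrt (1 + q ^ 2)
  set B := Real.sqrt (1 + p ^ 2)
  set s := Real.sqrt 5
  have hid : (A * B) ^ 2 = (1 + p * q) ^ 2 + (q - p) ^ 2 := by
    rw [mul_pow, hA2, hB2]; ring
  have hAB : A * B ≤ 5 := by nlinarith [mul_le_mul hA5 hB5 hB0.le h50.le]
  have hpq : 1 + p * q ≤ 5 := by nlinarith [sq_nonneg (p - q)]
  have hge : 1 + p * q ≤ A * B := by
    exact le_of_abs_le (abs_le_of_sq_le_sq (by linarith [sq_nonneg (q - p)]) (by positivity))
  have key : (q - p) ^ 2 * B ≤ 10 * s * (A * B - (1 + p * q)) := by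
    have h1 : (q - p) ^ 2 = (A * B - (1 + p * q)) * (A * B + (1 + p * q)) := by
      linear_combination -hid
    have h2 : (q - p) ^ 2 ≤ (A * B - (1 + p * q)) * 10 := by
      rw [h1]; exact mul_le_mul_of_nonneg_left (by linarith) (by linarith)
    nlinarith [mul_le_mul h2 hB5 hB0.le (by linarith : 0 ≤ (A * B - (1 + p * q)) * 10)]
  have : A - ((1 + p * q) / B + 1 / (10 * s) * (q - p) ^ 2)
      = (10 * s * (A * B - (1 + p * q)) - (q - p) ^ 2 * B) / (10 * s * B) := by
    field_simp
    ring
  have h0 : 0 ≤ (10 * s * (A * B - (1 + p * q)) - (q - p) ^ 2 * B) / (10 * s * B) :=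
    div_nonneg (by linarith) (by positivity)
  linarith

lemma flat_bound {q : ℝ} (hq : |q| ≤ 1) :
    1 / (4 * Real.sqrt 2) * q ^ 2 ≤ Real.sqrt (1 + q ^ 2) - 1 := by
  have hq2 : q ^ 2 ≤ 1 := by nlinarith [abs_le.mp hq]
  have hA2 := Real.sq_sqrt (show (0 : ℝ) ≤ 1 + q ^ 2 by positivity)
  have hA : Real.sqrt (1 + q ^ 2) ≤ Real.sqrt 2 := Real.sqrt_le_sqrt (by linarith)
  have hA1 : 1 ≤ Real.sqrt (1 + q ^ 2) := Real.one_le_sqrt.mpr (by nlinarith)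
  have h20 : 0 < Real.sqrt 2 := Real.sqrt_pos.mpr (by norm_num)
  set A := Real.sqrt (1 + q ^ 2)
  set s := Real.sqrt 2
  rw [div_mul_eq_mul_div, div_le_iff₀ (by positivity)]
  nlinarith [mul_nonneg (sub_nonneg.mpr hA1) (sub_nonneg.mpr hA)]

lemma ell_pos : 0 < ell := by unfold ell; positivity

lemma ell_sq : ell ^ 2 = 3 / 4 := by
  unfold ell
  rw [div_pow, Real.sq_sqrt (by norm_num)]; norm_num

lemma arcsin_ell : Real.arcsin ell = Real.pi / 3 := by
  unfold ell
  rw [← Real.sin_pi_div_three]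
  exact Real.arcsin_sin (by linarith [Real.pi_pos]) (by linarith [Real.pi_pos])

lemma sqrt_one_sub_ell : Real.sqrt (1 - ell ^ 2) = 1 / 2 := by
  rw [ell_sq, Real.sqrt_eq_iff_mul_self_eq_of_pos] <;> norm_num

lemma integral_arc : 2 * ∫ y in (-ell)..ell, Real.sqrt (1 - y ^ 2) = mlens + Real.sqrt 3 := by
  have hl := ell_pos
  have hder : ∀ y ∈ Set.uIcc (-ell) ell,
      HasDerivAt (fun y => (y * Real.sqrt (1 - y ^ 2) + Real.arcsin y) / 2)
        (Real.sqrt (1 - y ^ 2)) y := by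
    intro y hy
    rw [Set.uIcc_of_le (by linarith)] at hy
    have hy2 : 0 < 1 - y ^ 2 := by nlinarith [hy.1, hy.2, ell_sq]
    have hs := Real.sqrt_pos.mpr hy2
    have hs2 := Real.sq_sqrt hy2.le
    have h1 : HasDerivAt (fun y : ℝ => 1 - y ^ 2) (-(2 * y)) y := by
      simpa using ((hasDerivAt_id y).pow 2).const_sub 1
    have h2 := h1.sqrt hy2.ne'
    have h3 := Real.hasDerivAt_arcsin (x := y) (by rintro rfl; norm_num at hy2)
      (by rintro rfl; norm_num at hy2)
    have h4 := (((hasDerivAt_id y).mul h2).add h3).div_const 2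
    refine h4.congr_deriv ?_
    rw [id]
    field_simp
    nlinarith
  rw [intervalIntegral.integral_eq_sub_of_hasDerivAt hder
    (Continuous.intervalIntegrable (by fun_prop) _ _)]
  rw [neg_sq, sqrt_one_sub_ell, Real.arcsin_neg, arcsin_ell]
  unfold mlens ell
  ring

lemma integral_arc_scaled {ρ : ℝ} (hρ : 0 < ρ) :
    2 * ∫ x in (-(ρ * ell))..(ρ * ell), Real.sqrt (1 - (x / ρ) ^ 2)
      = ρ * (mlens + Real.sqrt 3) := by
  rw [intervalIntegral.integral_comp_div (fun y => Real.sqrt (1 - y ^ 2)) hρ.ne', ← integral_arc,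
    neg_div, mul_div_cancel_left₀ _ hρ.ne', smul_eq_mul]
  ring

lemma hasDerivAt_utilde {σ x : ℝ} (hρ : 0 < 1 + σ)
    (hx : x ∈ Set.Ioo (-((1 + σ) * ell)) ((1 + σ) * ell)) :
    HasDerivAt (utilde σ) (-(x / (1 + σ)) / Real.sqrt (1 - (x / (1 + σ)) ^ 2)) x := by
  have hy : |x / (1 + σ)| < ell := by
    rw [abs_div, abs_of_pos hρ, div_lt_iff₀ hρ, abs_lt]
    constructor <;> linarith [hx.1, hx.2]
  have hy2 : 0 < 1 - (x / (1 + σ)) ^ 2 := by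
    nlinarith [abs_lt.mp hy, ell_sq]
  have h1 : HasDerivAt (fun y : ℝ => 1 - y ^ 2) (-(2 * (x / (1 + σ)))) (x / (1 + σ)) := by
    simpa using ((hasDerivAt_id (x / (1 + σ))).pow 2).const_sub 1
  have h2 : HasDerivAt ulens (-(2 * (x / (1 + σ))) / (2 * Real.sqrt (1 - (x / (1 + σ)) ^ 2)))
      (x / (1 + σ)) := by
    refine ((h1.sqrt hy2.ne').sub_const (1 / 2)).congr_of_eventuallyEq ?_
    filter_upwards [continuous_abs.continuousAt.eventually_lt continuousAt_const hy] with y hy'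
    simp [ulens, hy'.le]
  have h3 := (h2.comp x ((hasDerivAt_id x).div_const (1 + σ))).const_mul (1 + σ)
  have hs := Real.sqrt_pos.mpr hy2
  refine h3.congr_deriv ?_
  field_simp

/-- Integration by parts for the first moment of `g₁' - g₂'`, with no boundary terms because
`g₁ = g₂` at both endpoints. -/
lemma integral_mul_deriv_sub {g₁ g₂ : ℝ → ℝ} {K₁ K₂ : NNReal} {a : ℝ}
    (hg₁ : LipschitzWith K₁ g₁) (hg₂ : LipschitzWith K₂ g₂)
    (ha : g₁ a = g₂ a) (hna : g₁ (-a) = g₂ (-a)) :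
    (∫ x in (-a)..a, x * deriv g₁ x) - ∫ x in (-a)..a, x * deriv g₂ x
      = - ∫ x in (-a)..a, (g₁ x - g₂ x) := by
  have hid : AbsolutelyContinuousOnInterval (fun x : ℝ => x) (-a) a :=
    LipschitzOnWith.absolutelyContinuousOnInterval (K := 1) (LipschitzWith.id.lipschitzOnWith)
  have h1 := hid.integral_mul_deriv_eq_deriv_mul
    (hg₁.lipschitzOnWith.absolutelyContinuousOnInterval)
  have h2 := hid.integral_mul_deriv_eq_deriv_mul
    (hg₂.lipschitzOnWith.absolutelyContinuousOnInterval)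
  simp only [deriv_id'', one_mul] at h1 h2
  rw [h1, h2, intervalIntegral.integral_sub (hg₁.continuous.intervalIntegrable _ _)
    (hg₂.continuous.intervalIntegrable _ _), ha, hna]
  ring

lemma eq_endpoints {g₁ g₂ : ℝ → ℝ} (h₁ : Continuous g₁) (h₂ : Continuous g₂) {a : ℝ}
    (h : ∀ x ∉ Set.Icc (-a) a, g₁ x = g₂ x) : g₁ a = g₂ a ∧ g₁ (-a) = g₂ (-a) := by
  have hc : IsClosed {x | g₁ x = g₂ x} := isClosed_eq h₁ h₂
  constructor
  · have : Set.Ioi a ⊆ {x | g₁ x = g₂ x} := fun x hx => h x fun h' => absurd h'.2 (not_le.mpr hx)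
    exact closure_minimal this hc (by rw [closure_Ioi]; exact Set.self_mem_Ici)
  · have : Set.Iio (-a) ⊆ {x | g₁ x = g₂ x} :=
      fun x hx => h x fun h' => absurd h'.1 (not_le.mpr hx)
    exact closure_minimal this hc (by rw [closure_Iio]; exact Set.self_mem_Iic)

lemma integrable_deriv_sq {g : ℝ → ℝ} {K : NNReal} (hg : LipschitzWith K g)
    (hs : HasCompactSupport g) : Integrable (fun x => (deriv g x) ^ 2) := by
  have hm : Measurable (fun x => (deriv g x) ^ 2) := (measurable_deriv g).pow_const 2
  have hsupp : Function.support (fun x => (deriv g x) ^ 2) ⊆ tsupport (deriv g) := by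
    intro x hx
    apply subset_tsupport
    intro h0
    simp [h0] at hx
  rw [← integrableOn_iff_integrable_of_support_subset hsupp]
  refine Measure.integrableOn_of_bounded (M := (K : ℝ) ^ 2) hs.deriv.measure_lt_top.ne
    hm.aestronglyMeasurable (Filter.Eventually.of_forall fun x => ?_)
  rw [norm_pow]
  exact pow_le_pow_left₀ (norm_nonneg _) (norm_deriv_le_of_lipschitz hg) 2

/-- Perimeter deficit lower bound for graph perturbations of the lens (Step 2 of
the proof of Theorem 4.2): for `σ ∈ [−1/2,1/2]` and Lipschitz, compactly supported
`g₁, g₂` with `g₁ = g₂` off `I_σ`, `|g₁'| ≤ 1` a.e. off `I_σ`, `|gᵢ'| ≤ 2` a.e. on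
`I_σ`, and `∫_{I_σ}(g₁ − g₂) = m`, the perimeter deficit
`∫_{ℝ∖I_σ}(√(1+g₁'²) − 1) + ∫_{I_σ}√(1+g₁'²) + ∫_{I_σ}√(1+g₂'²) − 4π/3 − √3·σ`
is at least
`2^{−5/2}·∫_{ℝ∖I_σ} g₁'² + (2·5^{3/2})^{−1}·Σᵢ ∫_{I_σ}(gᵢ' − ũᵢ')² + m·σ²/(1+σ)`,
where `ũ₁ = utilde σ` and `ũ₂ = −utilde σ`. -/
theorem lens_deficit_lower_bound (σ : ℝ) (hσ : σ ∈ Set.Icc (-(1 / 2) : ℝ) (1 / 2))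
    (g₁ g₂ : ℝ → ℝ) (K₁ K₂ : NNReal)
    (hg₁ : LipschitzWith K₁ g₁) (hg₂ : LipschitzWith K₂ g₂)
    (heq : ∀ x ∉ Isig σ, g₁ x = g₂ x)
    (hsupp₁ : HasCompactSupport g₁) (hsupp₂ : HasCompactSupport g₂)
    (hd₁ : ∀ᵐ x ∂(volume : Measure ℝ), x ∉ Isig σ → |deriv g₁ x| ≤ 1)
    (hd₂ : ∀ᵐ x ∂(volume : Measure ℝ), x ∈ Isig σ →
      |deriv g₁ x| ≤ 2 ∧ |deriv g₂ x| ≤ 2)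
    (hvol : (∫ x in Isig σ, (g₁ x - g₂ x)) = mlens) :
    (∫ x in (Isig σ)ᶜ, (Real.sqrt (1 + (deriv g₁ x) ^ 2) - 1))
      + (∫ x in Isig σ, Real.sqrt (1 + (deriv g₁ x) ^ 2))
      + (∫ x in Isig σ, Real.sqrt (1 + (deriv g₂ x) ^ 2))
      - 4 * Real.pi / 3 - Real.sqrt 3 * σ
    ≥ (1 / (4 * Real.sqrt 2)) * (∫ x in (Isig σ)ᶜ, (deriv g₁ x) ^ 2)
      + (1 / (10 * Real.sqrt 5)) *
          ((∫ x in Isig σ, (deriv g₁ x - deriv (utilde σ) x) ^ 2)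
            + ∫ x in Isig σ, (deriv g₂ x - deriv (fun y => -utilde σ y) x) ^ 2)
      + mlens * σ ^ 2 / (1 + σ) := by
  have hρ : 0 < 1 + σ := by linarith [hσ.1]
  have ha0 : 0 < (1 + σ) * ell := mul_pos hρ ell_pos
  have hImeas : MeasurableSet (Isig σ) := measurableSet_Icc
  have hIfin : volume (Isig σ) ≠ ⊤ := measure_Icc_lt_top.ne
  have hm₁ := measurable_deriv g₁
  have hm₂ := measurable_deriv g₂
  have hmu := measurable_deriv (utilde σ)
  have hout : (1 / (4 * Real.sqrt 2)) * (∫ x in (Isig σ)ᶜ, (deriv g₁ x) ^ 2)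
      ≤ ∫ x in (Isig σ)ᶜ, (Real.sqrt (1 + (deriv g₁ x) ^ 2) - 1) := by
    have hi := integrable_deriv_sq hg₁ hsupp₁
    rw [← integral_const_mul]
    refine setIntegral_mono_on_ae (hi.const_mul _).integrableOn ?_ hImeas.compl ?_
    · refine (hi.mono' (by fun_prop) (Filter.Eventually.of_forall fun x => ?_)).integrableOn
      have h1 : 1 ≤ Real.sqrt (1 + (deriv g₁ x) ^ 2) :=
        Real.one_le_sqrt.mpr (by nlinarith [sq_nonneg (deriv g₁ x)])
      have h2 := Real.sq_sqrt (show (0 : ℝ) ≤ 1 + (deriv g₁ x) ^ 2 by positivity)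
      rw [Real.norm_of_nonneg (by linarith)]
      nlinarith
    · filter_upwards [hd₁] with x hx hxI
      exact flat_bound (hx hxI)
  have hIoo : ∀ᵐ x ∂(volume : Measure ℝ), x ∈ Isig σ →
      x ∈ Set.Ioo (-((1 + σ) * ell)) ((1 + σ) * ell) := by
    filter_upwards [Ioo_ae_eq_Icc (μ := volume) (a := -((1 + σ) * ell)) (b := (1 + σ) * ell)]
      with x hx hxI
    exact hx.mpr hxI
  -- For `p` the slope of the rescaled arc, `√(1+p²) = 1/√(1-y²)` and `p² ≤ 3` on `I_σ`.
  have hslope : ∀ x ∈ Set.Ioo (-((1 + σ) * ell)) ((1 + σ) * ell),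
      |deriv (utilde σ) x| ≤ 2 ∧
      1 / Real.sqrt (1 + deriv (utilde σ) x ^ 2) = Real.sqrt (1 - (x / (1 + σ)) ^ 2) ∧
      deriv (utilde σ) x / Real.sqrt (1 + deriv (utilde σ) x ^ 2) = -(x / (1 + σ)) := by
    intro x hx
    rw [(hasDerivAt_utilde hρ hx).deriv]
    have hy : (x / (1 + σ)) ^ 2 ≤ 3 / 4 := by
      rw [div_pow, div_le_iff₀ (by positivity), ← ell_sq]
      nlinarith [hx.1, hx.2]
    set y := x / (1 + σ)
    have hs := Real.sqrt_pos.mpr (show 0 < 1 - y ^ 2 by linarith)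
    have hs2 := Real.sq_sqrt (show 0 ≤ 1 - y ^ 2 by linarith)
    set s := Real.sqrt (1 - y ^ 2)
    have hroot : Real.sqrt (1 + (-y / s) ^ 2) = 1 / s := by
      rw [show 1 + (-y / s) ^ 2 = (1 / s) ^ 2 by field_simp; linarith]
      exact Real.sqrt_sq (by positivity)
    rw [hroot]
    refine ⟨?_, by simp, by field_simp⟩
    rw [abs_div, abs_neg, abs_of_pos hs, div_le_iff₀ hs]
    exact abs_le_of_sq_le_sq (by nlinarith) (by positivity)
  have hbdd : ∀ᵐ x ∂(volume.restrict (Isig σ)), |x| ≤ (1 + σ) * ell ∧ |deriv g₁ x| ≤ 2 ∧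
      |deriv g₂ x| ≤ 2 ∧ |deriv (utilde σ) x| ≤ 2 := by
    rw [ae_restrict_iff' hImeas]
    filter_upwards [hd₂, hIoo] with x h2 hI hxI
    exact ⟨abs_le.mpr hxI, (h2 hxI).1, (h2 hxI).2, (hslope x (hI hxI)).1⟩
  have isqrt : ∀ q : ℝ → ℝ, Measurable q → (∀ᵐ x ∂(volume.restrict (Isig σ)), |q x| ≤ 2) →
      IntegrableOn (fun x => Real.sqrt (1 + q x ^ 2)) (Isig σ) := by
    intro q hq hb
    refine Measure.integrableOn_of_bounded (M := 3) hIfin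
      (by fun_prop : Measurable _).aestronglyMeasurable ?_
    filter_upwards [hb] with x hx
    rw [Real.norm_of_nonneg (Real.sqrt_nonneg _)]
    exact Real.sqrt_le_iff.mpr ⟨by norm_num, by nlinarith [abs_le.mp hx]⟩
  have isq : ∀ q : ℝ → ℝ, Measurable q → (∀ᵐ x ∂(volume.restrict (Isig σ)), |q x| ≤ 4) →
      IntegrableOn (fun x => q x ^ 2) (Isig σ) := by
    intro q hq hb
    refine Measure.integrableOn_of_bounded (M := 4 ^ 2) hIfin
      (by fun_prop : Measurable _).aestronglyMeasurable ?_
    filter_upwards [hb] with x hx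
    rw [norm_pow]
    exact pow_le_pow_left₀ (norm_nonneg _) hx 2
  have imul : ∀ q : ℝ → ℝ, Measurable q → (∀ᵐ x ∂(volume.restrict (Isig σ)), |q x| ≤ 2) →
      IntegrableOn (fun x => x * q x) (Isig σ) := by
    intro q hq hb
    refine Measure.integrableOn_of_bounded (M := (1 + σ) * ell * 2) hIfin
      (by fun_prop : Measurable _).aestronglyMeasurable ?_
    filter_upwards [hb, hbdd] with x hx hx'
    rw [norm_mul]
    exact mul_le_mul hx'.1 hx (norm_nonneg _) ha0.le
  have hb₁ := hbdd.mono fun x h => h.2.1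
  have hb₂ := hbdd.mono fun x h => h.2.2.1
  have iF₁ := isqrt _ hm₁ hb₁
  have iF₂ := isqrt _ hm₂ hb₂
  have iM₁ := imul _ hm₁ hb₁
  have iM₂ := imul _ hm₂ hb₂
  have iD₁ := isq (fun x => deriv g₁ x - deriv (utilde σ) x) (hm₁.sub hmu)
    (hbdd.mono fun x h => (abs_sub _ _).trans (by linarith [h.2.1, h.2.2.2]))
  have iD₂ := isq (fun x => deriv g₂ x - -deriv (utilde σ) x) (hm₂.sub hmu.neg)
    (hbdd.mono fun x h => (abs_sub _ _).trans (by rw [abs_neg]; linarith [h.2.2.1, h.2.2.2]))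
  have iS : IntegrableOn (fun x => Real.sqrt (1 - (x / (1 + σ)) ^ 2)) (Isig σ) :=
    Continuous.integrableOn_Icc (by fun_prop)
  have iL : IntegrableOn (fun x => 1 / (1 + σ) * (x * deriv g₁ x - x * deriv g₂ x)) (Isig σ) :=
    (iM₁.sub iM₂).const_mul _
  have iQ : IntegrableOn (fun x => 1 / (10 * Real.sqrt 5) *
      ((deriv g₁ x - deriv (utilde σ) x) ^ 2 + (deriv g₂ x - -deriv (utilde σ) x) ^ 2))
      (Isig σ) := (iD₁.add iD₂).const_mul _
  have iT : IntegrableOn (fun x => 2 * Real.sqrt (1 - (x / (1 + σ)) ^ 2)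
      - 1 / (1 + σ) * (x * deriv g₁ x - x * deriv g₂ x)) (Isig σ) := (iS.const_mul 2).sub iL
  have hin : ∫ x in Isig σ, ((2 * Real.sqrt (1 - (x / (1 + σ)) ^ 2)
        - 1 / (1 + σ) * (x * deriv g₁ x - x * deriv g₂ x))
        + 1 / (10 * Real.sqrt 5) * ((deriv g₁ x - deriv (utilde σ) x) ^ 2
          + (deriv g₂ x - -deriv (utilde σ) x) ^ 2))
      ≤ ∫ x in Isig σ, (Real.sqrt (1 + deriv g₁ x ^ 2) + Real.sqrt (1 + deriv g₂ x ^ 2)) := by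
    refine setIntegral_mono_on_ae
      (iT.add iQ) (iF₁.add iF₂) hImeas ?_
    filter_upwards [hd₂, hIoo] with x h2 hI hxI
    obtain ⟨hp, hS, hY⟩ := hslope x (hI hxI)
    have t₁ := tangent_bound hp (h2 hxI).1
    have t₂ := tangent_bound (p := -deriv (utilde σ) x) (by rwa [abs_neg]) (h2 hxI).2
    rw [neg_sq] at t₂
    have e : ∀ q B p : ℝ, (1 + p * q) / B = 1 / B + p / B * q := fun q B p => by ring
    rw [e, hS, hY] at t₁
    rw [e, hS, neg_div, hY] at t₂
    have e' : 1 / (1 + σ) * (x * deriv g₁ x - x * deriv g₂ x)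
        = x / (1 + σ) * deriv g₁ x - x / (1 + σ) * deriv g₂ x := by ring
    rw [e']
    linarith
  rw [integral_add iF₁ iF₂, integral_add iT iQ, integral_sub (iS.const_mul 2) iL, integral_const_mul,
    integral_const_mul, integral_const_mul, integral_sub iM₁ iM₂, integral_add iD₁ iD₂] at hin
  have hconv : ∀ f : ℝ → ℝ, ∫ x in Isig σ, f x
      = ∫ x in (-((1 + σ) * ell))..((1 + σ) * ell), f x := fun f => by
    rw [intervalIntegral.integral_of_le (by linarith), Isig, integral_Icc_eq_integral_Ioc]
  obtain ⟨he, hne⟩ := eq_endpoints hg₁.continuous hg₂.continuous heq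
  have hibp := integral_mul_deriv_sub hg₁ hg₂ he hne
  rw [← hconv, ← hconv, ← hconv, hvol] at hibp
  have harc := integral_arc_scaled hρ
  rw [← hconv] at harc
  rw [hibp, harc] at hin
  have hneg : ∀ x, deriv (fun y => -utilde σ y) x = -deriv (utilde σ) x := fun x => deriv.fun_neg
  simp only [hneg]
  have hfinal : (1 + σ) * (mlens + Real.sqrt 3) - 1 / (1 + σ) * -mlens
      = 4 * Real.pi / 3 + Real.sqrt 3 * σ + mlens * σ ^ 2 / (1 + σ) := by
    have h4 : 4 * Real.pi / 3 = 2 * mlens + Real.sqrt 3 := by unfold mlens; ring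
    rw [h4]
    field_simp
    ring
  linarith
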